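/- Let R be a ring. Then (GP(R), P(R)) is a strong left Frobenius pair in the category R-Mod of left R-modules: GP(R) is closed under extensions and under kernels of epimorphisms, P(R) ⊆ GP(R) with Ext^i_R(G, P) = 0 = Ext^i_R(P, G) for all i ≥ 1, G ∈ GP(R), P ∈ P(R), every G ∈ GP(R) admits a short exact sequence 0 → G → P → G' → 0 with P projective and G' Gorenstein projective, and every G ∈ GP(R) admits a short exact sequence 0 → G'' → P' → G → 0 with P' projective and G'' Gorenstein projective. -/

import Mathlib

/-!
The Gorenstein projective objects of an abelian category with enough projectives form the
largest class `S` (`IsGor`) such that every `N ∈ S` satisfies `Extⁱ(N, Q) = 0` for `i ≥ 1` and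
`Q` projective, and fits into a short exact sequence `0 → N → P → N' → 0` with `P` projective and
`N' ∈ S`. Given such a class, syzygies of its members are Gorenstein projective in the same sense,
so that short exact sequences can be spliced in both directions to a complete resolution; conversely
the cycles of a complete resolution form such a class (`gClass_iff_isGor`).

With this description each closure property only needs the `Ext` vanishing, which comes from
the long exact sequence or from a retraction, and one coresolution step. For an extension
`0 → A → B → D → 0` this step is the horseshoe construction: `A → P` extends to `B` because
`Ext¹(D, P) = 0`, and `B` embeds into `P ⊞ P'`. For the kernel `A` of an epimorphism `B → D`, embed
`A ⊆ B ⊆ P`; then `P/A` is an extension of `P/B` by `D`. For a retract `A` of `G ⊆ P`, the sum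
`P/A ⊞ A` is an extension of `P/G` by `G`, so `P/A` is again a retract of a member of the class.
-/

open CategoryTheory CategoryTheory.Limits CategoryTheory.Abelian ZeroObject

universe w v u

namespace FrobeniusPaper

variable {C : Type u} [Category.{v} C] [Abelian C]

/-- `f, g` form a short exact sequence `0 → A → B → D → 0` in the abelian category `C`. -/
def IsSES {A B D : C} (f : A ⟶ B) (g : B ⟶ D) : Prop :=
  ∃ w : f ≫ g = 0, (ShortComplex.mk f g w).ShortExact

/-- A "subcategory" in the sense of the paper: a full additive subcategory, regarded as the
predicate of membership for its objects, closed under isomorphisms and direct summands. -/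
structure IsSubcat (X : C → Prop) : Prop where
  zero : X 0
  iso_closed : ∀ {A B : C}, (A ≅ B) → X A → X B
  biprod_closed : ∀ {A B : C}, X A → X B → X (A ⊞ B)
  summand_closed : ∀ {A M : C} (i : A ⟶ M) (p : M ⟶ A), i ≫ p = 𝟙 A → X M → X A

/-- `Hat X n M` means `M ∈ X̂ₙ`, i.e. there is an exact sequence
`0 → Xₙ → ⋯ → X₁ → X₀ → M → 0` with all `Xᵢ ∈ X`. -/
def Hat (X : C → Prop) : ℕ → C → Prop
  | 0, M => X M
  | (n + 1), M => ∃ (K E : C) (f : K ⟶ E) (g : E ⟶ M), IsSES f g ∧ X E ∧ Hat X n K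

/-- `M ∈ X̂ = ⋃ₙ X̂ₙ`. -/
def HatAll (X : C → Prop) (M : C) : Prop := ∃ n, Hat X n M

/-- `W` is a cogenerator for `X`. -/
def IsCogenerator (W X : C → Prop) : Prop :=
  (∀ M, W M → X M) ∧
    ∀ M, X M → ∃ (W₀ X' : C) (f : M ⟶ W₀) (g : W₀ ⟶ X'), IsSES f g ∧ W W₀ ∧ X X'

/-- `W` is a generator for `X`. -/
def IsGenerator (W X : C → Prop) : Prop :=
  (∀ M, W M → X M) ∧
    ∀ M, X M → ∃ (X' W₀ : C) (f : X' ⟶ W₀) (g : W₀ ⟶ M), IsSES f g ∧ W W₀ ∧ X X'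

/-- `X` is closed under extensions. -/
def ExtClosed (X : C → Prop) : Prop :=
  ∀ ⦃A B D : C⦄ (f : A ⟶ B) (g : B ⟶ D), IsSES f g → X A → X D → X B

/-- `X` is closed under kernels of epimorphisms. -/
def KerEpiClosed (X : C → Prop) : Prop :=
  ∀ ⦃A B D : C⦄ (f : A ⟶ B) (g : B ⟶ D), IsSES f g → X B → X D → X A

/-- A thick subcategory: closed under direct summands and two-out-of-three for
short exact sequences. -/
def IsThickSub (T : C → Prop) : Prop :=
  IsSubcat T ∧ ∀ ⦃A B D : C⦄ (f : A ⟶ B) (g : B ⟶ D), IsSES f g →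
    (T A → T B → T D) ∧ (T A → T D → T B) ∧ (T B → T D → T A)

/-- Membership in `Thick(X)`, the smallest thick subcategory containing `X`. -/
def thickClosure (X : C → Prop) (M : C) : Prop :=
  ∀ T : C → Prop, IsThickSub T → (∀ N, X N → T N) → T M

variable [HasExt.{w} C]

/-- `Y ∈ X^⊥`, i.e. `Extⁱ(M, Y) = 0` for all `i ≥ 1` and `M ∈ X`. -/
def rightPerp (X : C → Prop) (Y : C) : Prop :=
  ∀ M, X M → ∀ i : ℕ, 1 ≤ i → Subsingleton (Abelian.Ext M Y i)

/-- A left Frobenius pair `(X, W)`. -/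
structure LeftFrobenius (X W : C → Prop) : Prop where
  subX : IsSubcat X
  subW : IsSubcat W
  extClosed : ExtClosed X
  kerEpiClosed : KerEpiClosed X
  cogen : IsCogenerator W X
  perp : ∀ M, W M → rightPerp X M

/-- A strong left Frobenius pair `(X, W)`. -/
structure StrongLeftFrobenius (X W : C → Prop) extends LeftFrobenius X W : Prop where
  gen : IsGenerator W X
  proj : ∀ M N, W M → X N → ∀ i : ℕ, 1 ≤ i → Subsingleton (Abelian.Ext M N i)

/-- A cotorsion pair `(U, V)` on an extension-closed subcategory `B` of `C`. -/
structure CotorsionPairOn (B U V : C → Prop) : Prop where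
  subU : ∀ M, U M → B M
  subV : ∀ M, V M → B M
  isoU : ∀ {A B' : C}, (A ≅ B') → U A → U B'
  summandU : ∀ {A M : C} (i : A ⟶ M) (p : M ⟶ A), i ≫ p = 𝟙 A → U M → U A
  isoV : ∀ {A B' : C}, (A ≅ B') → V A → V B'
  summandV : ∀ {A M : C} (i : A ⟶ M) (p : M ⟶ A), i ≫ p = 𝟙 A → V M → V A
  ext1 : ∀ M N, U M → V N → Subsingleton (Abelian.Ext M N 1)
  res : ∀ M, B M → ∃ (V₀ U₀ : C) (f : V₀ ⟶ U₀) (g : U₀ ⟶ M), IsSES f g ∧ U U₀ ∧ V V₀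
  cores : ∀ M, B M → ∃ (V₀ U₀ : C) (f : M ⟶ V₀) (g : V₀ ⟶ U₀), IsSES f g ∧ U U₀ ∧ V V₀

/-- `GClass X W M`: there exists a doubly infinite exact sequence
`⋯ → P₋₁ → P₀ → P₁ → ⋯` with all terms in `X`, with `M ≅ Ker(P₀ → P₁)`, and such that the
complex `Hom(P, Q)` is exact for every `Q ∈ W`. -/
def GClass (X W : C → Prop) (M : C) : Prop :=
  ∃ (P : ℤ → C) (d : ∀ n : ℤ, P n ⟶ P (n + 1)) (hd : ∀ n, d n ≫ d (n + 1) = 0),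
    (∀ n, X (P n)) ∧
    (∀ n, (ShortComplex.mk (d n) (d (n + 1)) (hd n)).Exact) ∧
    Nonempty (M ≅ kernel (d 0)) ∧
    (∀ Q : C, W Q → ∀ (n : ℤ) (ψ : P (n + 1) ⟶ Q), d n ≫ ψ = 0 →
      ∃ φ : P (n + 1 + 1) ⟶ Q, d (n + 1) ≫ φ = ψ)

set_option linter.unusedSectionVars false

/-! ### Short exact sequences -/

theorem IsSES.mono {A B D : C} {f : A ⟶ B} {g : B ⟶ D} (h : IsSES f g) : Mono f :=
  h.choose_spec.mono_f

theorem IsSES.epi {A B D : C} {f : A ⟶ B} {g : B ⟶ D} (h : IsSES f g) : Epi g :=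
  h.choose_spec.epi_g

theorem IsSES.exists_lift {A B D : C} {f : A ⟶ B} {g : B ⟶ D} (h : IsSES f g) {T : C}
    (x : T ⟶ B) (hx : x ≫ g = 0) : ∃ y : T ⟶ A, y ≫ f = x := by
  obtain ⟨w, h⟩ := h
  have := h.mono_f
  exact ⟨h.exact.lift x hx, h.exact.lift_f x hx⟩

theorem IsSES.exists_desc {A B D : C} {f : A ⟶ B} {g : B ⟶ D} (h : IsSES f g) {T : C}
    (x : B ⟶ T) (hx : f ≫ x = 0) : ∃ y : D ⟶ T, g ≫ y = x := by
  obtain ⟨w, h⟩ := h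
  have := h.epi_g
  exact ⟨h.exact.desc x hx, h.exact.g_desc x hx⟩

theorem isSES_of_refinements {A B D : C} {f : A ⟶ B} {g : B ⟶ D} (w : f ≫ g = 0)
    (hf : Mono f) (hg : Epi g)
    (h : ∀ (T : C) (x : T ⟶ B), x ≫ g = 0 →
      ∃ (T' : C) (π : T' ⟶ T) (_ : Epi π) (y : T' ⟶ A), π ≫ x = y ≫ f) : IsSES f g :=
  ⟨w, { exact := (ShortComplex.exact_iff_exact_up_to_refinements _).2 fun T x hx => h T x hx
        mono_f := hf
        epi_g := hg }⟩

theorem isSES_cokernel {A B : C} (f : A ⟶ B) [hf : Mono f] : IsSES f (cokernel.π f) :=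
  ⟨cokernel.condition f,
    { exact := ShortComplex.exact_of_g_is_cokernel _ (cokernelIsCokernel f)
      mono_f := hf
      epi_g := inferInstanceAs (Epi (cokernel.π f)) }⟩

theorem isSES_kernel {A B : C} (g : A ⟶ B) [hg : Epi g] : IsSES (kernel.ι g) g :=
  ⟨kernel.condition g,
    { exact := ShortComplex.exact_of_f_is_kernel _ (kernelIsKernel g)
      mono_f := inferInstanceAs (Mono (kernel.ι g))
      epi_g := hg }⟩

/-- The third isomorphism theorem: for monomorphisms `X → Y → Z` the cokernels form a short
exact sequence `0 → Y/X → Z/X → Z/Y → 0`. -/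
theorem IsSES.comp_mono {X Y Z K₁ K₂ : C} {f₁ : X ⟶ Y} {g₁ : Y ⟶ K₁} {f₂ : Y ⟶ Z} {g₂ : Z ⟶ K₂}
    (h₁ : IsSES f₁ g₁) (h₂ : IsSES f₂ g₂) :
    ∃ (E : C) (q : Z ⟶ E) (u : K₁ ⟶ E) (v : E ⟶ K₂),
      IsSES (f₁ ≫ f₂) q ∧ IsSES u v := by
  have := h₁.mono
  have := h₂.mono
  have := h₁.epi
  have := h₂.epi
  have hc := isSES_cokernel (f₁ ≫ f₂)
  obtain ⟨u, hu⟩ := h₁.exists_desc (f₂ ≫ cokernel.π (f₁ ≫ f₂))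
    (by rw [← Category.assoc, cokernel.condition])
  obtain ⟨v, hv⟩ := hc.exists_desc g₂ (by rw [Category.assoc, h₂.choose, comp_zero])
  refine ⟨_, _, u, v, hc, isSES_of_refinements ?_ ?_ ?_ ?_⟩
  · rw [← cancel_epi g₁, ← Category.assoc, hu, Category.assoc, hv, h₂.choose, comp_zero]
  · refine Preadditive.mono_of_cancel_zero _ fun {T} k hk => ?_
    obtain ⟨T', π, hπ, y, hy⟩ := surjective_up_to_refinements_of_epi g₁ k
    have h0 : (y ≫ f₂) ≫ cokernel.π (f₁ ≫ f₂) = 0 := by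
      rw [Category.assoc, ← hu, ← Category.assoc, ← hy, Category.assoc, hk, comp_zero]
    obtain ⟨z, hz⟩ := hc.exists_lift _ h0
    have hz' : z ≫ f₁ = y := by
      rw [← cancel_mono f₂, Category.assoc, hz]
    rw [← cancel_epi π, hy, ← hz', Category.assoc, h₁.choose, comp_zero, comp_zero]
  · have : Epi (cokernel.π (f₁ ≫ f₂) ≫ v) := by rw [hv]; infer_instance
    exact epi_of_epi (cokernel.π (f₁ ≫ f₂)) v
  · intro T x hx
    obtain ⟨T', π, hπ, z, hz⟩ := surjective_up_to_refinements_of_epi (cokernel.π (f₁ ≫ f₂)) x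
    have h0 : z ≫ g₂ = 0 := by
      rw [← hv, ← Category.assoc, ← hz, Category.assoc, hx, comp_zero]
    obtain ⟨y, hy⟩ := h₂.exists_lift z h0
    exact ⟨T', π, hπ, y ≫ g₁, by rw [hz, ← hy, Category.assoc, Category.assoc, hu]⟩

/-- If `β : B → P` extends the first map of `0 → A → P → A' → 0` along `f`, then
`0 → B → P ⊞ D → A' → 0` is short exact. -/
theorem IsSES.lift_biprod {A B D P A' : C} {f : A ⟶ B} {g : B ⟶ D} {i : A ⟶ P} {p : P ⟶ A'}
    (h : IsSES f g) (h' : IsSES i p) (β : B ⟶ P) (hβ : f ≫ β = i) :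
    ∃ q : P ⊞ D ⟶ A', IsSES (biprod.lift β g) q := by
  have := h'.mono
  have := h.epi
  have := h'.epi
  obtain ⟨δ, hδ⟩ := h.exists_desc (β ≫ p) (by rw [← Category.assoc, hβ, h'.choose])
  refine ⟨biprod.desc p (-δ), isSES_of_refinements ?_ ?_ ?_ ?_⟩
  · simp [biprod.lift_desc, hδ]
  · refine Preadditive.mono_of_cancel_zero _ fun {T} k hk => ?_
    have h1 : k ≫ β = 0 := by simpa using hk =≫ biprod.fst
    have h2 : k ≫ g = 0 := by simpa using hk =≫ biprod.snd
    obtain ⟨l, rfl⟩ := h.exists_lift k h2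
    have : l = 0 := by
      rw [← cancel_mono i, ← hβ, ← Category.assoc, h1, zero_comp]
    rw [this, zero_comp]
  · have : Epi (biprod.inl ≫ biprod.desc p (-δ)) := by rw [biprod.inl_desc]; infer_instance
    exact epi_of_epi biprod.inl _
  · intro T x hx
    obtain ⟨T', π, hπ, b, hb⟩ := surjective_up_to_refinements_of_epi g (x ≫ biprod.snd)
    have hx' : x ≫ biprod.fst ≫ p = x ≫ biprod.snd ≫ δ := by
      rw [biprod.desc_eq] at hx
      simpa [sub_eq_zero, ← sub_eq_add_neg] using hx
    -- `b` has the right component in `D`; its component in `P` is off by an element of `A`.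
    have h0 : (π ≫ x ≫ biprod.fst - b ≫ β) ≫ p = 0 := by
      simp only [Preadditive.sub_comp, Category.assoc]
      rw [hx', ← hδ, ← Category.assoc b, ← hb, Category.assoc, Category.assoc, sub_self]
    obtain ⟨a, ha⟩ := h'.exists_lift _ h0
    refine ⟨T', π, hπ, b + a ≫ f, ?_⟩
    apply biprod.hom_ext
    · simp [hβ, ha]
    · simp [hb, h.choose]

/-! ### Vanishing of `Ext` into projectives -/

/-- `Extⁱ(M, Q) = 0` for all projective `Q` and all `i ≥ 1`. -/
def ExtVanishes (M : C) : Prop :=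
  ∀ Q : C, Projective Q → ∀ (n : ℕ) (x : Abelian.Ext M Q (n + 1)), x = 0

theorem ExtVanishes.middle {A B D : C} {f : A ⟶ B} {g : B ⟶ D} (h : IsSES f g)
    (hA : ExtVanishes A) (hD : ExtVanishes D) : ExtVanishes B := by
  intro Q hQ n x
  obtain ⟨w, h⟩ := h
  obtain ⟨y, hy⟩ := Ext.contravariant_sequence_exact₂ h Q x (hA Q hQ n _)
  rw [← hy, hD Q hQ n y, Ext.comp_zero]

theorem ExtVanishes.left {A B D : C} {f : A ⟶ B} {g : B ⟶ D} (h : IsSES f g)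
    (hB : ExtVanishes B) (hD : ExtVanishes D) : ExtVanishes A := by
  intro Q hQ n x
  obtain ⟨w, h⟩ := h
  obtain ⟨y, hy⟩ := Ext.contravariant_sequence_exact₁ h Q x (add_comm 1 (n + 1))
    (hD Q hQ (n + 1) _)
  rw [← hy, hB Q hQ n y, Ext.comp_zero]

theorem ExtVanishes.retract {A M : C} (i : A ⟶ M) (p : M ⟶ A) (hip : i ≫ p = 𝟙 A)
    (hM : ExtVanishes M) : ExtVanishes A := by
  intro Q hQ n x
  have : (Ext.mk₀ i).comp ((Ext.mk₀ p).comp x (zero_add _)) (zero_add _) = x := by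
    rw [Ext.mk₀_comp_mk₀_assoc, hip, Ext.mk₀_id_comp]
  rw [← this, hM Q hQ n ((Ext.mk₀ p).comp x (zero_add _)), Ext.comp_zero]

theorem ExtVanishes.of_projective (P : C) [Projective P] : ExtVanishes P :=
  fun _ _ _ x => x.eq_zero_of_projective

theorem ExtVanishes.exists_extension {A B D Q : C} {f : A ⟶ B} {g : B ⟶ D} (h : IsSES f g)
    (hD : ExtVanishes D) (hQ : Projective Q) (a : A ⟶ Q) : ∃ b : B ⟶ Q, f ≫ b = a := by
  obtain ⟨w, h⟩ := h
  obtain ⟨y, hy⟩ := Ext.contravariant_sequence_exact₁ h Q (Ext.mk₀ a) (add_zero 1)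
    (hD Q hQ 0 _)
  obtain ⟨b, rfl⟩ := (Ext.mk₀_bijective _ _).2 y
  rw [Ext.mk₀_comp_mk₀] at hy
  exact ⟨b, (Ext.mk₀_bijective _ _).1 hy⟩

/-! ### A coinductive description of Gorenstein projectivity -/

/-- The largest class `S` of objects such that every `N ∈ S` has vanishing `Ext` into
projectives and embeds into a projective with cokernel again in `S`. It is shown below to
consist of the Gorenstein projective objects. -/
def IsGor (M : C) : Prop :=
  ∃ S : C → Prop, S M ∧ ∀ N, S N → ExtVanishes N ∧
    ∃ (P N' : C) (f : N ⟶ P) (g : P ⟶ N'), IsSES f g ∧ Projective P ∧ S N'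

theorem IsGor.extVanishes {M : C} (h : IsGor M) : ExtVanishes M := by
  obtain ⟨S, hM, hS⟩ := h
  exact (hS M hM).1

theorem IsGor.exists_cosyzygy {M : C} (h : IsGor M) :
    ∃ (P N : C) (f : M ⟶ P) (g : P ⟶ N), IsSES f g ∧ Projective P ∧ IsGor N := by
  obtain ⟨S, hM, hS⟩ := h
  obtain ⟨-, P, N, f, g, hfg, hP, hN⟩ := hS M hM
  exact ⟨P, N, f, g, hfg, hP, S, hN, hS⟩

/-- For a one-step coresolution it suffices that the cokernel is already in the class. -/
theorem IsGor.of_cosyzygy {M P N : C} (hM : ExtVanishes M) {f : M ⟶ P} {g : P ⟶ N}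
    (h : IsSES f g) (hP : Projective P) (hN : IsGor N) : IsGor M := by
  refine ⟨fun X => X = M ∨ IsGor X, Or.inl rfl, ?_⟩
  rintro X (rfl | hX)
  · exact ⟨hM, P, N, f, g, h, hP, Or.inr hN⟩
  · obtain ⟨P', N', f', g', h', hP', hN'⟩ := hX.exists_cosyzygy
    exact ⟨hX.extVanishes, P', N', f', g', h', hP', Or.inr hN'⟩

theorem IsGor.of_projective (P : C) [hP : Projective P] : IsGor P := by
  refine ⟨fun X => Projective X, hP, fun X hX =>
    ⟨ExtVanishes.of_projective X, X, cokernel (𝟙 X), 𝟙 X, _, isSES_cokernel (𝟙 X), hX, ?_⟩⟩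
  exact ((isZero_zero C).of_iso (cokernel.ofEpi (𝟙 X))).projective

theorem IsGor.extension {A B D : C} {f : A ⟶ B} {g : B ⟶ D} (h : IsSES f g)
    (hA : IsGor A) (hD : IsGor D) : IsGor B := by
  refine ⟨fun X => ∃ (A D : C) (f : A ⟶ X) (g : X ⟶ D), IsSES f g ∧ IsGor A ∧ IsGor D,
    ⟨A, D, f, g, h, hA, hD⟩, ?_⟩
  rintro X ⟨A, D, f, g, h, hA, hD⟩
  refine ⟨hA.extVanishes.middle h hD.extVanishes, ?_⟩
  obtain ⟨P, A', i, p, hi, hP, hA'⟩ := hA.exists_cosyzygy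
  obtain ⟨P', D', j, q, hj, hP', hD'⟩ := hD.exists_cosyzygy
  obtain ⟨β, hβ⟩ := hD.extVanishes.exists_extension h hP i
  obtain ⟨r, hr⟩ := h.lift_biprod hi β hβ
  have hj' : IsSES (biprod.map (𝟙 P) j) (biprod.snd ≫ q) := by
    have := hj.mono
    have := hj.epi
    refine isSES_of_refinements ?_ inferInstance (epi_comp _ _) ?_
    · simp [hj.choose]
    · intro T x hx
      obtain ⟨y, hy⟩ := hj.exists_lift (x ≫ biprod.snd) (by simpa using hx)
      refine ⟨T, 𝟙 T, inferInstance, biprod.lift (x ≫ biprod.fst) y, ?_⟩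
      apply biprod.hom_ext <;> simp [hy]
  obtain ⟨E, s, u, v, hs, huv⟩ := hr.comp_mono hj'
  exact ⟨P ⊞ P', E, _, s, hs, inferInstance, A', D', u, v, huv, hA', hD'⟩

theorem IsGor.kernel_epi {A B D : C} {f : A ⟶ B} {g : B ⟶ D} (h : IsSES f g)
    (hB : IsGor B) (hD : IsGor D) : IsGor A := by
  obtain ⟨P, B', i, p, hi, hP, hQuot⟩ := hB.exists_cosyzygy
  obtain ⟨E, s, u, v, hs, huv⟩ := h.comp_mono hi
  exact IsGor.of_cosyzygy (hB.extVanishes.left h hD.extVanishes) hs hP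
    (IsGor.extension huv hD hQuot)

/-- Closure under retracts. If `A` is a retract of `G` with complement `N`, and
`0 → G → P → G' → 0` is a coresolution step for `G`, then `E = P/A` is an extension of `G'` by
`N`, so that `E ⊞ A` is an extension of `G'` by `N ⊞ A ≅ G`. Hence `E` is again a retract of an
object of the class. -/
theorem IsGor.retract {A M : C} (i : A ⟶ M) (p : M ⟶ A) (hip : i ≫ p = 𝟙 A)
    (hM : IsGor M) : IsGor A := by
  refine ⟨fun X => ∃ (G : C) (i : X ⟶ G) (p : G ⟶ X), i ≫ p = 𝟙 X ∧ IsGor G,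
    ⟨M, i, p, hip, hM⟩, ?_⟩
  rintro A ⟨G, i, p, hip, hG⟩
  refine ⟨hG.extVanishes.retract i p hip, ?_⟩
  obtain ⟨P, G', j, q, hj, hP, hG'⟩ := hG.exists_cosyzygy
  have : Mono i := by
    have : Mono (i ≫ p) := by rw [hip]; infer_instance
    exact mono_of_mono i p
  have hN := isSES_cokernel i
  obtain ⟨E, s, u, v, hs, huv⟩ := hN.comp_mono hj
  have := huv.mono
  have := huv.epi
  refine ⟨P, E, i ≫ j, s, hs, hP, E ⊞ A, biprod.inl, biprod.fst, by simp, ?_⟩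
  refine IsGor.extension (f := biprod.lift (cokernel.π i ≫ u) p) (g := biprod.fst ≫ v)
    (isSES_of_refinements ?_ ?_ (epi_comp _ _) ?_) hG hG'
  · simp [huv.choose]
  · refine Preadditive.mono_of_cancel_zero _ fun {T} k hk => ?_
    have h1 : k ≫ cokernel.π i = 0 := by
      rw [← cancel_mono u]
      simpa using hk =≫ biprod.fst
    have h2 : k ≫ p = 0 := by simpa using hk =≫ biprod.snd
    obtain ⟨l, rfl⟩ := hN.exists_lift k h1
    rw [Category.assoc, hip, Category.comp_id] at h2
    rw [h2, zero_comp]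
  · intro T x hx
    obtain ⟨n, hn⟩ := huv.exists_lift (x ≫ biprod.fst) (by simpa using hx)
    obtain ⟨T', π, hπ, y, hy⟩ := surjective_up_to_refinements_of_epi (cokernel.π i) n
    -- correct the lift `y` of `n` so that its component in `A` is the prescribed one
    refine ⟨T', π, hπ, y - y ≫ p ≫ i + π ≫ x ≫ biprod.snd ≫ i, ?_⟩
    apply biprod.hom_ext
    · simp [← hn, reassoc_of% hy]
    · simp [hip]

/-! ### Comparison with complete resolutions -/

/-- If every element of `S` has a successor and a predecessor in `S` for the relation `r`, then
through every element of `S` passes a two-sided infinite `r`-chain in `S`. -/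
theorem exists_int_chain {α : Type*} {S : α → Prop} {r : α → α → Prop}
    (hs : ∀ a, S a → ∃ b, S b ∧ r a b) (hp : ∀ a, S a → ∃ b, S b ∧ r b a) (a : α) (ha : S a) :
    ∃ z : ℤ → α, z 0 = a ∧ (∀ n, S (z n)) ∧ ∀ n, r (z n) (z (n + 1)) := by
  choose s hsS hsr using fun x : Subtype S => hs x.1 x.2
  choose t htS htr using fun x : Subtype S => hp x.1 x.2
  let s' : Subtype S → Subtype S := fun x => ⟨s x, hsS x⟩
  let t' : Subtype S → Subtype S := fun x => ⟨t x, htS x⟩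
  let z : ℤ → Subtype S := fun n =>
    match n with
    | Int.ofNat k => s'^[k] ⟨a, ha⟩
    | Int.negSucc k => t'^[k + 1] ⟨a, ha⟩
  refine ⟨fun n => (z n).1, rfl, fun n => (z n).2, fun n => ?_⟩
  match n with
  | Int.ofNat k =>
    have h : z (Int.ofNat k + 1) = s' (z (Int.ofNat k)) :=
      Function.iterate_succ_apply' s' k ⟨a, ha⟩
    beta_reduce
    rw [h]
    exact hsr _
  | Int.negSucc 0 => exact htr ⟨a, ha⟩
  | Int.negSucc (k + 1) =>
    have h : z (Int.negSucc (k + 1)) = t' (z (Int.negSucc (k + 1) + 1)) :=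
      Function.iterate_succ_apply' t' (k + 1) ⟨a, ha⟩
    beta_reduce
    rw [h]
    exact htr _

theorem IsGor.exists_syzygy [EnoughProjectives C] {M : C} (h : IsGor M) :
    ∃ (N P : C) (f : N ⟶ P) (g : P ⟶ M), IsSES f g ∧ Projective P ∧ IsGor N :=
  ⟨_, Projective.over M, _, Projective.π M, isSES_kernel _, inferInstance,
    IsGor.of_cosyzygy
      ((ExtVanishes.of_projective _).left (isSES_kernel (Projective.π M)) h.extVanishes)
      (isSES_kernel (Projective.π M)) inferInstance h⟩

theorem IsGor.gClass [EnoughProjectives C] {M : C} (h : IsGor M) :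
    GClass (fun P : C => Projective P) (fun P : C => Projective P) M := by
  obtain ⟨Z, hZ0, hZ, hr⟩ := exists_int_chain (S := IsGor (C := C))
    (r := fun A B => ∃ (P : C) (f : A ⟶ P) (g : P ⟶ B), IsSES f g ∧ Projective P)
    (fun A hA => by
      obtain ⟨P, N, f, g, h, hP, hN⟩ := hA.exists_cosyzygy
      exact ⟨N, hN, P, f, g, h, hP⟩)
    (fun A hA => by
      obtain ⟨N, P, f, g, h, hP, hN⟩ := hA.exists_syzygy
      exact ⟨N, hN, P, f, g, h, hP⟩) M h
  choose P i p hip hP using hr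
  have hi : ∀ n, Mono (i n) := fun n => (hip n).mono
  have hp : ∀ n, Epi (p n) := fun n => (hip n).epi
  subst hZ0
  refine ⟨P, fun n => p n ≫ i (n + 1), fun n => ?_, hP, fun n => ?_, ⟨?_⟩, ?_⟩
  · rw [Category.assoc, ← Category.assoc (i (n + 1)), (hip (n + 1)).choose, zero_comp, comp_zero]
  · refine (ShortComplex.exact_iff_exact_up_to_refinements _).2 fun T x hx => ?_
    have hx' : x ≫ p (n + 1) = 0 := by
      rw [← cancel_mono (i (n + 1 + 1)), zero_comp, Category.assoc]
      exact hx
    obtain ⟨y, hy⟩ := (hip (n + 1)).exists_lift x hx'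
    obtain ⟨T', π, hπ, z, hz⟩ := surjective_up_to_refinements_of_epi (p n) y
    exact ⟨T', π, hπ, z, by
      dsimp only
      rw [← hy, ← Category.assoc, hz, Category.assoc]⟩
  · exact ((hip 0).choose_spec.fIsKernel.conePointUniqueUpToIso (kernelIsKernel (p 0))).trans
      (kernelCompMono (p 0) (i (0 + 1))).symm
  · intro Q hQ n ψ hψ
    have h1 : i (n + 1) ≫ ψ = 0 := by
      rw [← cancel_epi (p n), ← Category.assoc, hψ, comp_zero]
    obtain ⟨θ, hθ⟩ := (hip (n + 1)).exists_desc ψ h1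
    obtain ⟨φ, hφ⟩ := (hZ (n + 1 + 1 + 1)).extVanishes.exists_extension (hip (n + 1 + 1)) hQ θ
    exact ⟨φ, by rw [Category.assoc, hφ, hθ]⟩

theorem isGor_of_gClass {M : C}
    (h : GClass (fun P : C => Projective P) (fun P : C => Projective P) M) : IsGor M := by
  obtain ⟨P, d, hd, hP, hex, ⟨e⟩, hQ⟩ := h
  -- the cycles of the complete resolution
  let Z : ℤ → C := fun n => kernel (d n)
  let c : ∀ n, P n ⟶ Z (n + 1) := fun n => kernel.lift (d (n + 1)) (d n) (hd n)
  have hc : ∀ n, Epi (c n) := fun n => (hex n).epi_kernelLift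
  have hcι : ∀ n, c n ≫ kernel.ι (d (n + 1)) = d n := fun n => kernel.lift_ι _ _ _
  have hses : ∀ n, IsSES (kernel.ι (d n)) (c n) := by
    intro n
    refine isSES_of_refinements ?_ inferInstance (hc n) fun T x hx => ?_
    · rw [← cancel_mono (kernel.ι (d (n + 1))), Category.assoc, hcι, kernel.condition, zero_comp]
    · have hx' : x ≫ d n = 0 := by rw [← hcι, ← Category.assoc, hx, zero_comp]
      exact ⟨T, 𝟙 T, inferInstance, kernel.lift (d n) x hx', by simp⟩
  have hext : ∀ (Q : C), Projective Q → ∀ (n : ℤ) (a : Z n ⟶ Q),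
      ∃ b : P n ⟶ Q, kernel.ι (d n) ≫ b = a := by
    intro Q hQp n a
    obtain ⟨m, rfl⟩ : ∃ m, n = m + 1 + 1 := ⟨n - 2, by ring⟩
    obtain ⟨φ, hφ⟩ := hQ Q hQp m (c (m + 1) ≫ a) (by
      have : d m ≫ c (m + 1) = 0 := by
        rw [← cancel_mono (kernel.ι (d (m + 1 + 1))), Category.assoc, hcι, hd, zero_comp]
      rw [← Category.assoc, this, zero_comp])
    refine ⟨φ, ?_⟩
    rw [← cancel_epi (c (m + 1)), ← Category.assoc, hcι, hφ]
  have hvan : ∀ (Q : C), Projective Q → ∀ (k : ℕ) (n : ℤ) (x : Abelian.Ext (Z n) Q (k + 1)),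
      x = 0 := by
    intro Q hQp k
    induction k with
    | zero =>
      intro n x
      obtain ⟨m, rfl⟩ : ∃ m, n = m + 1 := ⟨n - 1, by ring⟩
      have := hP m
      obtain ⟨w, h⟩ := hses m
      obtain ⟨y, rfl⟩ := Ext.contravariant_sequence_exact₃ h Q x
        (Ext.eq_zero_of_projective _) (add_zero 1)
      obtain ⟨a, rfl⟩ := (Ext.mk₀_bijective _ _).2 y
      obtain ⟨b, rfl⟩ := hext Q hQp m a
      rw [← Ext.mk₀_comp_mk₀]
      exact h.extClass_comp_assoc _
    | succ k ih =>
      intro n x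
      obtain ⟨m, rfl⟩ : ∃ m, n = m + 1 := ⟨n - 1, by ring⟩
      have := hP m
      obtain ⟨w, h⟩ := hses m
      obtain ⟨y, rfl⟩ := Ext.contravariant_sequence_exact₃ h Q x
        (Ext.eq_zero_of_projective _) (add_comm 1 (k + 1))
      rw [ih m y, Ext.comp_zero]
  have hZ : IsGor (Z 0) := by
    refine ⟨fun X => ∃ n, X = Z n, ⟨0, rfl⟩, ?_⟩
    rintro X ⟨n, rfl⟩
    exact ⟨fun Q hQp k x => hvan Q hQp k n x, P n, Z (n + 1), _, _, hses n, hP n, n + 1, rfl⟩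
  exact hZ.retract e.hom e.inv e.hom_inv_id

theorem gClass_iff_isGor [EnoughProjectives C] (M : C) :
    GClass (fun P : C => Projective P) (fun P : C => Projective P) M ↔ IsGor M :=
  ⟨isGor_of_gClass, IsGor.gClass⟩

theorem isSES_biprod (A B : C) : IsSES (biprod.inl : A ⟶ A ⊞ B) (biprod.snd : A ⊞ B ⟶ B) := by
  refine isSES_of_refinements (by simp) inferInstance inferInstance fun T x hx => ?_
  refine ⟨T, 𝟙 T, inferInstance, x ≫ biprod.fst, ?_⟩
  apply biprod.hom_ext <;> simp [hx]

/-- For any ring `R`, the pair (Gorenstein projective `R`-modules,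
projective `R`-modules) is a strong left Frobenius pair in `R`-Mod. -/
theorem statement10 (R : Type u) [Ring R] [HasExt.{w} (ModuleCat.{u} R)] :
    StrongLeftFrobenius (C := ModuleCat.{u} R)
      (GClass (fun P => Projective P) (fun P => Projective P))
      (fun P => Projective P) := by
  have key : GClass (C := ModuleCat.{u} R) (fun P => Projective P) (fun P => Projective P)
      = IsGor (C := ModuleCat.{u} R) := funext fun M => propext (gClass_iff_isGor M)
  rw [key]
  exact
    { subX :=
        { zero := IsGor.of_projective 0
          iso_closed := fun e hA => hA.retract e.inv e.hom e.inv_hom_id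
          biprod_closed := fun hA hB => IsGor.extension (isSES_biprod _ _) hA hB
          summand_closed := fun i p hip hM => hM.retract i p hip }
      subW :=
        { zero := inferInstance
          iso_closed := fun e hA => Projective.of_iso e hA
          biprod_closed := fun hA hB => by
            have := hA
            have := hB
            infer_instance
          summand_closed := fun i p hip hM => Retract.projective ⟨i, p, hip⟩ }
      extClosed := fun _ _ _ _ _ h hA hD => IsGor.extension h hA hD
      kerEpiClosed := fun _ _ _ _ _ h hB hD => IsGor.kernel_epi h hB hD
      cogen := ⟨fun P hP => IsGor.of_projective P, fun M hM => hM.exists_cosyzygy |>.imp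
        fun P ⟨N, f, g, h, hP, hN⟩ => ⟨N, f, g, h, hP, hN⟩⟩
      perp := fun Q hQ M hM n hn => by
        obtain ⟨k, rfl⟩ := Nat.exists_eq_add_of_le' hn
        exact subsingleton_of_forall_eq 0 (hM.extVanishes Q hQ k)
      gen := ⟨fun P hP => IsGor.of_projective P, fun M hM => by
        obtain ⟨N, P, f, g, h, hP, hN⟩ := hM.exists_syzygy
        exact ⟨N, P, f, g, h, hP, hN⟩⟩
      proj := fun P N hP hN n hn => by
        obtain ⟨k, rfl⟩ := Nat.exists_eq_add_of_le' hn
        have : Projective P := hP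
        exact Ext.subsingleton_of_projective P N k }

end FrobeniusPaper
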